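/- Let v be a TU-game on N = {1,…,n}, let γ_S > 0 be weights for all nonempty proper subsets S of N, and let v* be a closest balanced game to v. If x ∈ C(v*) and S is a nonempty proper subset of N with x(S) ≤ v(S), then v*(S) = x(S). -/

import Mathlib

open Finset

/-- Sum of an allocation `x` over a coalition `S`: `x(S) = ∑_{i ∈ S} x_i`. -/
def coalSum {n : ℕ} (x : Fin n → ℝ) (S : Finset (Fin n)) : ℝ := ∑ i ∈ S, x i

/-- `x` belongs to the core of the TU-game `v`. -/
def inCore {n : ℕ} (v : Finset (Fin n) → ℝ) (x : Fin n → ℝ) : Prop :=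
  coalSum x Finset.univ = v Finset.univ ∧ ∀ S : Finset (Fin n), v S ≤ coalSum x S

/-- A game is balanced iff its core is nonempty. -/
def IsBalancedGame {n : ℕ} (v : Finset (Fin n) → ℝ) : Prop := ∃ x, inCore v x

/-- The nonempty proper subsets of `N = {1,…,n}`. -/
def propSubsets (n : ℕ) : Finset (Finset (Fin n)) :=
  Finset.univ.filter (fun S => S ≠ ∅ ∧ S ≠ Finset.univ)

/-- Weighted squared distance `∑_{∅≠S⊊N} γ_S (v(S) − w(S))²` between games. -/
def dist2 {n : ℕ} (γ v w : Finset (Fin n) → ℝ) : ℝ :=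
  ∑ S ∈ propSubsets n, γ S * (v S - w S) ^ 2

/-- `w` is a closest balanced game to `v` with respect to the weights `γ`:
`w` is a balanced game with `w(N) = v(N)` minimizing the weighted squared distance
to `v` among all balanced games `u` with `u(N) = v(N)`. -/
def IsClosestBalanced {n : ℕ} (γ v w : Finset (Fin n) → ℝ) : Prop :=
  w ∅ = 0 ∧ IsBalancedGame w ∧ w Finset.univ = v Finset.univ ∧
    ∀ u : Finset (Fin n) → ℝ, u ∅ = 0 → IsBalancedGame u →
      u Finset.univ = v Finset.univ → dist2 γ v w ≤ dist2 γ v u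

/-!
Let `x` be a core element of `v*`. Replacing the worth of a single nonempty proper coalition `S` by
any value at most `x(S)` keeps `x` in the core, so the game stays balanced, and it changes only the
`S`-term of the distance to `v`. Minimality therefore makes `v*(S)` the point of `(-∞, x(S)]`
nearest to `v(S)`, that is, `v*(S) = min (v(S)) (x(S))`.
-/

theorem eq_min_of_abs_sub_le_abs_sub_min {α : Type*} [AddCommGroup α] [LinearOrder α]
    [IsOrderedAddMonoid α] {a b c : α} (hbc : b ≤ c) (h : |a - b| ≤ |a - min a c|) :
    b = min a c := by
  rcases le_total a c with hac | hca
  · rw [min_eq_left hac, sub_self, abs_zero, abs_nonpos_iff, sub_eq_zero] at h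
    rw [min_eq_left hac, h]
  · rw [min_eq_right hca, abs_of_nonneg (sub_nonneg.2 (hbc.trans hca)),
      abs_of_nonneg (sub_nonneg.2 hca), sub_le_sub_iff_left] at h
    rw [min_eq_right hca, le_antisymm hbc h]

section

variable {n : ℕ} {γ v w : Finset (Fin n) → ℝ} {x : Fin n → ℝ} {S : Finset (Fin n)} {c : ℝ}

theorem mem_propSubsets : S ∈ propSubsets n ↔ S ≠ ∅ ∧ S ≠ univ := by
  simp [propSubsets]

theorem inCore.update (hx : inCore w x) (hS : S ≠ univ) (hc : c ≤ coalSum x S) :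
    inCore (Function.update w S c) x :=
  ⟨by rw [Function.update_of_ne hS.symm, hx.1],
    update_le_iff.2 ⟨hc, fun T _ => hx.2 T⟩⟩

theorem dist2_eq_add_sum_erase (hS : S ∈ propSubsets n) :
    dist2 γ v w =
      γ S * (v S - w S) ^ 2 + ∑ T ∈ (propSubsets n).erase S, γ T * (v T - w T) ^ 2 :=
  (add_sum_erase _ _ hS).symm

theorem dist2_le_dist2_update_iff (hS : S ∈ propSubsets n) (hγ : 0 < γ S) :
    dist2 γ v w ≤ dist2 γ v (Function.update w S c) ↔ |v S - w S| ≤ |v S - c| := by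
  have rest_eq : ∑ T ∈ (propSubsets n).erase S, γ T * (v T - Function.update w S c T) ^ 2 =
      ∑ T ∈ (propSubsets n).erase S, γ T * (v T - w T) ^ 2 :=
    sum_congr rfl fun T hT => by rw [Function.update_of_ne (ne_of_mem_erase hT)]
  rw [dist2_eq_add_sum_erase hS, dist2_eq_add_sum_erase hS, rest_eq, add_le_add_iff_right,
    Function.update_self, mul_le_mul_iff_right₀ hγ, sq_le_sq]

theorem IsClosestBalanced.abs_sub_le (hw : IsClosestBalanced γ v w) (hx : inCore w x)
    (hS : S ∈ propSubsets n) (hγ : 0 < γ S) (hc : c ≤ coalSum x S) :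
    |v S - w S| ≤ |v S - c| := by
  obtain ⟨hw_empty, -, hw_univ, hw_min⟩ := hw
  obtain ⟨hS_empty, hS_univ⟩ := mem_propSubsets.1 hS
  refine (dist2_le_dist2_update_iff hS hγ).1 (hw_min _ ?_ ⟨x, hx.update hS_univ hc⟩ ?_)
  · rw [Function.update_of_ne hS_empty.symm, hw_empty]
  · rw [Function.update_of_ne hS_univ.symm, hw_univ]

theorem closest_balanced_eq_of_core_le_general (hw : IsClosestBalanced γ v w)
    (hx : inCore w x) (hS : S ∈ propSubsets n) (hγ : 0 < γ S) :
    w S = min (v S) (coalSum x S) :=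
  eq_min_of_abs_sub_le_abs_sub_min (hx.2 S) (hw.abs_sub_le hx hS hγ (min_le_right _ _))

end

/-- Lemma 3 (Lemma `closest3`): if `x ∈ C(v*)` and `x(S) ≤ v(S)` for a nonempty
proper subset `S` of `N`, then `v*(S) = x(S)`. -/
theorem closest_balanced_eq_of_core_le (n : ℕ) (v vstar γ : Finset (Fin n) → ℝ)
    (hv0 : v ∅ = 0)
    (hγ : ∀ S ∈ propSubsets n, 0 < γ S)
    (hclosest : IsClosestBalanced γ v vstar)
    (x : Fin n → ℝ) (hx : inCore vstar x)
    (S : Finset (Fin n)) (hS : S ∈ propSubsets n)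
    (hxS : coalSum x S ≤ v S) :
    vstar S = coalSum x S := by
  rw [closest_balanced_eq_of_core_le_general hclosest hx hS (hγ S hS), min_eq_right hxS]
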